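/- Let r ∈ (1,2), let W be a real inner product space, and let δ ≥ 0. Then there exists a constant c > 0 depending only on r such that for all τ, η ∈ W satisfying 2δ + ‖τ‖_W + ‖η‖_W ≥ 2^(2−r)·‖τ − η‖_W, one has (δ^r + ‖τ‖_W^r)^(1/r) · (δ^r + ‖η‖_W^r)^(1/r) ≥ c·(δ^r + ‖τ‖_W^r + ‖η‖_W^r)^(2/r). -/

import Mathlib

open Real

/-!
Write `a = ‖τ‖`, `b = ‖η‖`. Since `|a - b| ≤ ‖τ - η‖` and the factor `k = 2 ^ (2 - r)` exceeds `1`,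
the hypothesis can be solved for either norm: `a ≤ M (δ + b)` and `b ≤ M (δ + a)` with
`M = (k + 1) / (k - 1)`. So `δ ^ r + a ^ r + b ^ r` is at most a constant times `δ ^ r + b ^ r`, and
likewise at most the same constant times `δ ^ r + a ^ r`; the claim is the product of these two
bounds, raised to the power `1 / r`.
-/

section Scalar

variable {x y δ a b k M r S K A B s : ℝ}

theorem add_rpow_le_two_rpow_mul_add_rpow (hx : 0 ≤ x) (hy : 0 ≤ y) (hr : 0 ≤ r) :
    (x + y) ^ r ≤ 2 ^ r * (x ^ r + y ^ r) := by
  have hmax : 0 ≤ max x y := le_max_of_le_left hx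
  have hsum : x + y ≤ 2 * max x y := by linarith [le_max_left x y, le_max_right x y]
  calc (x + y) ^ r ≤ (2 * max x y) ^ r := rpow_le_rpow (by positivity) hsum hr
    _ = 2 ^ r * max x y ^ r := mul_rpow zero_le_two hmax
    _ = 2 ^ r * max (x ^ r) (y ^ r) := by
      rw [(monotoneOn_rpow_Ici_of_exponent_nonneg hr).map_max hx hy]
    _ ≤ 2 ^ r * (x ^ r + y ^ r) := by
      gcongr
      exact max_le_add_of_nonneg (rpow_nonneg hx r) (rpow_nonneg hy r)

theorem add_rpow_add_rpow_le_of_le_mul_add (hδ : 0 ≤ δ) (ha : 0 ≤ a) (hb : 0 ≤ b) (hM : 0 ≤ M)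
    (hr : 0 ≤ r) (h : a ≤ M * (δ + b)) :
    δ ^ r + a ^ r + b ^ r ≤ (1 + M ^ r * 2 ^ r) * (δ ^ r + b ^ r) := by
  have ha_rpow : a ^ r ≤ M ^ r * 2 ^ r * (δ ^ r + b ^ r) :=
    calc a ^ r ≤ (M * (δ + b)) ^ r := rpow_le_rpow ha h hr
      _ = M ^ r * (δ + b) ^ r := mul_rpow hM (by positivity)
      _ ≤ M ^ r * (2 ^ r * (δ ^ r + b ^ r)) := by
        gcongr
        exact add_rpow_le_two_rpow_mul_add_rpow hδ hb hr
      _ = M ^ r * 2 ^ r * (δ ^ r + b ^ r) := (mul_assoc _ _ _).symm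
  linarith

theorem le_div_mul_add_of_mul_sub_le (hk : 1 < k) (hδ : 0 ≤ δ)
    (h : k * (a - b) ≤ 2 * δ + a + b) : a ≤ (k + 1) / (k - 1) * (δ + b) := by
  rw [div_mul_eq_mul_div, le_div_iff₀ (sub_pos.2 hk)]
  have hkδ : 2 * δ ≤ (k + 1) * δ := by gcongr; linarith
  linarith

theorem rpow_two_mul_le_of_le_mul (hS : 0 ≤ S) (hK : 0 ≤ K) (hA : 0 ≤ A) (hB : 0 ≤ B)
    (hs : 0 ≤ s) (hSA : S ≤ K * A) (hSB : S ≤ K * B) :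
    S ^ (2 * s) ≤ K ^ (2 * s) * (A ^ s * B ^ s) := by
  have hsq : S ^ 2 ≤ K ^ 2 * (A * B) :=
    calc S ^ 2 = S * S := sq S
      _ ≤ (K * A) * (K * B) := by gcongr
      _ = K ^ 2 * (A * B) := by ring
  calc S ^ (2 * s) = (S ^ 2) ^ s := by rw [rpow_mul hS, rpow_two]
    _ ≤ (K ^ 2 * (A * B)) ^ s := rpow_le_rpow (sq_nonneg S) hsq hs
    _ = K ^ (2 * s) * (A ^ s * B ^ s) := by
      rw [mul_rpow (sq_nonneg K) (mul_nonneg hA hB), mul_rpow hA hB, rpow_mul hK, rpow_two]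

end Scalar

theorem norm_le_div_mul_add_of_mul_norm_sub_le {W : Type*} [SeminormedAddGroup W] {k δ : ℝ}
    {τ η : W} (hk : 1 < k) (hδ : 0 ≤ δ) (h : k * ‖τ - η‖ ≤ 2 * δ + ‖τ‖ + ‖η‖) :
    ‖τ‖ ≤ (k + 1) / (k - 1) * (δ + ‖η‖) := by
  refine le_div_mul_add_of_mul_sub_le hk hδ (le_trans ?_ h)
  gcongr
  exact sub_le_iff_le_add'.2 (norm_le_norm_add_norm_sub' τ η)

theorem stmt5_general {r k : ℝ} (hr : 0 < r) (hk : 1 < k) :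
    ∃ c : ℝ, 0 < c ∧
      ∀ (W : Type*) [SeminormedAddGroup W] (δ : ℝ), 0 ≤ δ →
        ∀ τ η : W, k * ‖τ - η‖ ≤ 2 * δ + ‖τ‖ + ‖η‖ →
          c * (δ ^ r + ‖τ‖ ^ r + ‖η‖ ^ r) ^ (2 / r) ≤
            (δ ^ r + ‖τ‖ ^ r) ^ (1 / r) * (δ ^ r + ‖η‖ ^ r) ^ (1 / r) := by
  have hM : 0 ≤ (k + 1) / (k - 1) := div_nonneg (by linarith) (by linarith)
  set M := (k + 1) / (k - 1)
  set K := 1 + M ^ r * 2 ^ r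
  have hK : 0 < K := by positivity
  refine ⟨(K ^ (2 / r))⁻¹, by positivity, fun W _ δ hδ τ η h ↦ ?_⟩
  have hτ : ‖τ‖ ≤ M * (δ + ‖η‖) := norm_le_div_mul_add_of_mul_norm_sub_le hk hδ h
  have hη : ‖η‖ ≤ M * (δ + ‖τ‖) :=
    norm_le_div_mul_add_of_mul_norm_sub_le hk hδ (by rwa [norm_sub_rev, add_right_comm])
  have hSη : δ ^ r + ‖τ‖ ^ r + ‖η‖ ^ r ≤ K * (δ ^ r + ‖η‖ ^ r) :=
    add_rpow_add_rpow_le_of_le_mul_add hδ (norm_nonneg τ) (norm_nonneg η) hM hr.le hτ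
  have hSτ : δ ^ r + ‖τ‖ ^ r + ‖η‖ ^ r ≤ K * (δ ^ r + ‖τ‖ ^ r) := by
    rw [add_right_comm]
    exact add_rpow_add_rpow_le_of_le_mul_add hδ (norm_nonneg η) (norm_nonneg τ) hM hr.le hη
  rw [inv_mul_le_iff₀ (by positivity), ← mul_one_div 2 r]
  exact rpow_two_mul_le_of_le_mul (by positivity) hK.le (by positivity) (by positivity)
    (by positivity) hSτ hSη

/-- Estimate (A.9), used in the pseudoplastic case `r < 2` of the proof of the
Hölder-continuity part of the theorem on `r`-power-framed functions: whenever
`2δ + ‖τ‖ + ‖η‖ ≥ 2^(2-r) ‖τ - η‖`, one has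
`(δ^r + ‖τ‖^r)^(1/r) (δ^r + ‖η‖^r)^(1/r) ≥ c (δ^r + ‖τ‖^r + ‖η‖^r)^(2/r)`,
with `c > 0` depending only on `r`. -/
theorem stmt5 (r : ℝ) (hr1 : 1 < r) (hr2 : r < 2) :
    ∃ c : ℝ, 0 < c ∧
      ∀ (W : Type) [NormedAddCommGroup W] [InnerProductSpace ℝ W] (δ : ℝ), 0 ≤ δ →
        ∀ τ η : W, (2 : ℝ) ^ (2 - r) * ‖τ - η‖ ≤ 2 * δ + ‖τ‖ + ‖η‖ →
          c * (δ ^ r + ‖τ‖ ^ r + ‖η‖ ^ r) ^ (2 / r) ≤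
            (δ ^ r + ‖τ‖ ^ r) ^ (1 / r) * (δ ^ r + ‖η‖ ^ r) ^ (1 / r) := by
  obtain ⟨c, hc, hbound⟩ := stmt5_general (zero_lt_one.trans hr1)
    (one_lt_rpow one_lt_two (sub_pos.2 hr2))
  exact ⟨c, hc, fun W _ _ ↦ hbound W⟩
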